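/- Let k ≥ 2 and let Φ be a CNF propositional formula each of whose clauses has one of the forms ¬v, ¬v ∨ w, or w_1 ∨ … ∨ w_k (where the positive literals w_1,…,w_k are not necessarily distinct). If Φ is unsatisfiable, then Φ contains a clause of the form w_1 ∨ … ∨ w_k such that for each i ∈ {1,…,k} there exists a finite sequence of variables w_i = v^i_1, v^i_2, …, v^i_{l_i} with the property that the clause ¬v^i_{l_i} belongs to Φ and, for every j ∈ {1,…,l_i−1}, the clause ¬v^i_j ∨ v^i_{j+1} belongs to Φ. -/

import Mathlib

/-- Clauses of the forms `¬v`, `¬v ∨ w`, or `w_1 ∨ … ∨ w_k` (the positive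
literals not necessarily distinct), over propositional variables from `V`. -/
inductive HClause (V : Type) (k : ℕ) where
  | negUnit (v : V)
  | impl (v w : V)
  | posK (w : Fin k → V)

/-- Satisfaction of such a clause by an assignment `t : V → Bool`. -/
def HClause.Holds {V : Type} {k : ℕ} (t : V → Bool) : HClause V k → Prop
  | .negUnit v => t v = false
  | .impl v w => t v = false ∨ t w = true
  | .posK w => ∃ m, t (w m) = true

/-- if a finite CNF `Φ` whose clauses all have one of the forms
`¬v`, `¬v ∨ w`, `w_1 ∨ … ∨ w_k` (with `k ≥ 2`) is unsatisfiable, then `Φ`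
contains a clause `w_1 ∨ … ∨ w_k` such that for each `i` there is a chain of
variables `w_i = v^i_1, …, v^i_{l_i}` with `¬v^i_{l_i} ∈ Φ` and
`¬v^i_j ∨ v^i_{j+1} ∈ Φ` for every `j < l_i`. -/
theorem stmt11 {V : Type} (k : ℕ) (hk : 2 ≤ k) (Φ : Set (HClause V k))
    (hfin : Φ.Finite)
    (hunsat : ∀ t : V → Bool, ∃ c ∈ Φ, ¬ HClause.Holds t c) :
    ∃ w : Fin k → V, HClause.posK w ∈ Φ ∧
      ∀ i : Fin k, ∃ (l : ℕ) (v : Fin (l + 1) → V),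
        v 0 = w i ∧
        HClause.negUnit (v (Fin.last l)) ∈ Φ ∧
        ∀ j : Fin l, HClause.impl (v j.castSucc) (v j.succ) ∈ Φ := by
  classical
  let P : V → Prop := fun x => ∃ (l : ℕ) (v : Fin (l + 1) → V),
        v 0 = x ∧
        HClause.negUnit (v (Fin.last l)) ∈ Φ ∧
        ∀ j : Fin l, HClause.impl (v j.castSucc) (v j.succ) ∈ Φ
  obtain ⟨c, hc, hn⟩ := hunsat (fun x => decide (¬ P x))
  cases c with
  | negUnit v =>
    exfalso
    apply hn
    have : P v := ⟨0, fun _ => v, rfl, hc, fun j => j.elim0⟩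
    simpa [HClause.Holds] using this
  | impl a b =>
    exfalso
    apply hn
    have key : P b → P a := by
      rintro ⟨l, v, h0, h1, h2⟩
      refine ⟨l + 1, Fin.cons a v, rfl, ?_, ?_⟩
      · rw [← Fin.succ_last, Fin.cons_succ]
        exact h1
      · intro j
        refine Fin.cases ?_ (fun j => ?_) j
        · rw [Fin.cons_succ, h0]
          exact hc
        · rw [Fin.cons_succ, ← Fin.succ_castSucc, Fin.cons_succ]
          exact h2 j
    simp only [HClause.Holds, decide_eq_false_iff_not, decide_eq_true_eq, not_not]
    exact (Classical.em (P b)).elim (fun h => Or.inl (key h)) Or.inr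
  | posK w =>
    refine ⟨w, hc, fun i => ?_⟩
    by_contra hP
    exact hn ⟨i, decide_eq_true hP⟩
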